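/- Let 𝔫 be a nonabelian k-step nilpotent finite-dimensional real Lie algebra such that either 𝔫 or ℝ⊕𝔫 admits a symplectic structure. Let m₁,…,m_k be subspaces of 𝔫* with m₁⊕…⊕m_j = {f ∈ 𝔫* : f vanishes on Cʲ(𝔫)} for each j = 1,…,k, and for 1 ≤ t ≤ ⌈k/2⌉ let P_t : Λ²𝔫* → m_t∧m_{k−t+1} be the projection with respect to the decomposition Λ²𝔫* = ⊕_{1≤i≤j≤k} m_i∧m_j. Then for every t with 1 ≤ t ≤ ⌈k/2⌉ such that dim C^{k−t}(𝔫) + dim C^{t−1}(𝔫) > dim 𝔫 (in particular for t = 1), there exists a closed 2-form σ on 𝔫 which is not exact and satisfies P_t(σ) ≠ 0. -/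

import Mathlib

/-- A 2-form on a real Lie algebra is closed if it satisfies the cocycle condition. -/
def IsClosed2Form {L : Type*} [LieRing L] [LieAlgebra ℝ L]
    (ω : L →ₗ[ℝ] L →ₗ[ℝ] ℝ) : Prop :=
  ∀ x y z : L, ω ⁅x, y⁆ z + ω ⁅y, z⁆ x + ω ⁅z, x⁆ y = 0

/-- A 2-form is exact if `ω(X,Y) = -f [X,Y]` for some linear functional `f`. -/
def IsExact2Form {L : Type*} [LieRing L] [LieAlgebra ℝ L]
    (ω : L →ₗ[ℝ] L →ₗ[ℝ] ℝ) : Prop :=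
  ∃ f : L →ₗ[ℝ] ℝ, ∀ x y : L, ω x y = -f ⁅x, y⁆

/-- A symplectic structure: a nondegenerate alternating closed bilinear form. -/
def IsSymplectic {L : Type*} [LieRing L] [LieAlgebra ℝ L]
    (ω : L →ₗ[ℝ] L →ₗ[ℝ] ℝ) : Prop :=
  (∀ x : L, ω x x = 0) ∧ (∀ x : L, (∀ y : L, ω x y = 0) → x = 0) ∧ IsClosed2Form ω

/-- `U ∧ V`: the span, inside the bilinear forms on `L`, of the alternating forms
`(X,Y) ↦ a(X)b(Y) − a(Y)b(X)` with `a ∈ U`, `b ∈ V`. -/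
noncomputable def wedgeSpan {L : Type*} [AddCommGroup L] [Module ℝ L]
    (U V : Submodule ℝ (Module.Dual ℝ L)) : Submodule ℝ (L →ₗ[ℝ] L →ₗ[ℝ] ℝ) :=
  Submodule.span ℝ {w | ∃ a ∈ U, ∃ b ∈ V, w = a.smulRight b - b.smulRight a}

/-- The direct product of the one-dimensional abelian Lie algebra `ℝ` with `L`. -/
noncomputable instance RL.lieRing {L : Type*} [LieRing L] [LieAlgebra ℝ L] :
    LieRing (ℝ × L) where
  bracket a b := (0, ⁅a.2, b.2⁆)
  add_lie x y z := by simp [Prod.ext_iff]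
  lie_add x y z := by simp [Prod.ext_iff]
  lie_self x := by simp [Prod.ext_iff]
  leibniz_lie x y z := by simp [Prod.ext_iff]

noncomputable instance RL.lieAlgebra {L : Type*} [LieRing L] [LieAlgebra ℝ L] :
    LieAlgebra ℝ (ℝ × L) where
  lie_smul t x y := by simp [Bracket.bracket, Prod.ext_iff]


lemma aux_bracket {L : Type*} [LieRing L] [LieAlgebra ℝ L] (a : ℕ) : ∀ (b : ℕ) (y z : L),
    y ∈ LieModule.lowerCentralSeries ℝ L L a → z ∈ LieModule.lowerCentralSeries ℝ L L b →
    ⁅y, z⁆ ∈ LieModule.lowerCentralSeries ℝ L L (a + b + 1) := by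
  have hstep : ∀ (b : ℕ) (u z : L), z ∈ LieModule.lowerCentralSeries ℝ L L b →
      ⁅u, z⁆ ∈ LieModule.lowerCentralSeries ℝ L L (b + 1) := by
    intro b u z hz
    rw [LieModule.lowerCentralSeries_succ]
    exact LieSubmodule.lie_mem_lie (LieSubmodule.mem_top u) hz
  induction a with
  | zero =>
    intro b y z _ hz
    simpa using hstep b y z hz
  | succ a ih =>
    intro b y z hy hz
    rw [LieModule.lowerCentralSeries_succ, ← LieSubmodule.mem_toSubmodule,
      LieSubmodule.lieIdeal_oper_eq_linear_span'] at hy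
    induction hy using Submodule.span_induction with
    | mem x hx =>
      obtain ⟨u, -, w, hw, rfl⟩ := hx
      rw [lie_lie]
      have h1 := hstep _ u _ (ih b w z hw hz)
      have h2 := ih (b+1) w ⁅u, z⁆ hw (hstep b u z hz)
      have e1 : a + b + 1 + 1 = a + 1 + b + 1 := by omega
      have e2 : a + (b + 1) + 1 = a + 1 + b + 1 := by omega
      rw [e1] at h1
      rw [e2] at h2
      exact sub_mem h1 h2
    | zero => simp
    | add x y _ _ hx hy => rw [add_lie]; exact add_mem hx hy
    | smul c x _ hx => rw [smul_lie]; exact (LieModule.lowerCentralSeries ℝ L L _).smul_mem c hx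

lemma aux_vanish {L : Type*} [LieRing L] [LieAlgebra ℝ L] (k : ℕ)
    (hstep : LieModule.lowerCentralSeries ℝ L L k = ⊥)
    (σ : L →ₗ[ℝ] L →ₗ[ℝ] ℝ) (halt : ∀ x, σ x x = 0) (hcl : IsClosed2Form σ) (a : ℕ) :
    ∀ (b : ℕ) (x z : L), k ≤ a + b →
    x ∈ LieModule.lowerCentralSeries ℝ L L a → z ∈ LieModule.lowerCentralSeries ℝ L L b →
    σ x z = 0 := by
  have hzero : ∀ (c : ℕ) (x : L), k ≤ c → x ∈ LieModule.lowerCentralSeries ℝ L L c → x = 0 := by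
    intro c x hc hx
    have := LieModule.antitone_lowerCentralSeries ℝ L L hc hx
    rw [hstep] at this
    simpa using this
  have hneg : ∀ x y, σ x y = - σ y x := by
    intro x y
    have := halt (x + y)
    simp [halt] at this
    linarith
  induction a with
  | zero =>
    intro b x z hb _ hz
    rw [hzero b z (by omega) hz]; simp
  | succ a ih =>
    intro b x z hb hx hz
    rw [LieModule.lowerCentralSeries_succ, ← LieSubmodule.mem_toSubmodule,
      LieSubmodule.lieIdeal_oper_eq_linear_span'] at hx
    induction hx using Submodule.span_induction with
    | mem x hx =>
      obtain ⟨u, -, y, hy, rfl⟩ := hx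
      have h := hcl u y z
      have h1 := hzero _ _ (by omega) (aux_bracket a b y z hy hz)
      have h2 := ih (b+1) y ⁅z, u⁆ (by omega) hy
        (by simpa using aux_bracket b 0 z u hz (by simp))
      rw [h1, hneg ⁅z, u⁆ y, h2] at h
      simpa using h
    | zero => simp
    | add x y _ _ hx hy => simp [hx, hy]
    | smul c x _ hx => simp [hx]

lemma aux_proj {V : Type*} [AddCommGroup V] [Module ℝ V] (k : ℕ) (m : ℕ → Submodule ℝ V)
    (hindep : iSupIndep fun i : Finset.Icc 1 k => m i)
    (htop : (⨆ i ∈ Finset.Icc 1 k, m i) = ⊤) :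
    ∃ p : ℕ → V →ₗ[ℝ] V, (∀ i ∈ Finset.Icc 1 k, ∀ f, p i f ∈ m i) ∧
      (∀ f, ∑ i ∈ Finset.Icc 1 k, p i f = f) ∧
      (∀ i ∈ Finset.Icc 1 k, ∀ l ∈ Finset.Icc 1 k, l ≠ i → ∀ f ∈ m l, p i f = 0) := by
  classical
  have hint : DirectSum.IsInternal (fun i : Finset.Icc 1 k => m i) := by
    apply DirectSum.isInternal_submodule_of_iSupIndep_of_iSup_eq_top hindep
    rw [← htop, iSup_subtype]
  obtain ⟨e, he⟩ : ∃ e : (DirectSum (Finset.Icc 1 k) fun i => m i) ≃ₗ[ℝ] V,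
      ∀ x, e x = DirectSum.coeLinearMap (fun i : Finset.Icc 1 k => m i) x :=
    ⟨LinearEquiv.ofBijective (DirectSum.coeLinearMap (fun i : Finset.Icc 1 k => m i)) hint,
      fun _ => rfl⟩
  let q : Finset.Icc 1 k → V →ₗ[ℝ] V := fun i =>
    (m i).subtype ∘ₗ (DirectSum.component ℝ _ (fun i : Finset.Icc 1 k => m i) i) ∘ₗ e.symm.toLinearMap
  refine ⟨fun i => if h : i ∈ Finset.Icc 1 k then q ⟨i, h⟩ else 0, ?_, ?_, ?_⟩
  · intro i hi f
    simp only [hi, dif_pos]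
    exact Subtype.prop _
  · intro f
    rw [← Finset.sum_coe_sort]
    have : f = e (e.symm f) := by simp
    conv_rhs => rw [this]
    rw [he, DirectSum.coeLinearMap_eq_dfinsuppSum, DFinsupp.sum_eq_sum_fintype]
    · apply Finset.sum_congr rfl
      intro i _
      simp [q]
      rfl
    · simp
  · intro i hi l hl hne f hf
    simp only [hi, dif_pos]
    have : e.symm f = DirectSum.lof ℝ _ (fun i : Finset.Icc 1 k => m i) ⟨l, hl⟩ ⟨f, hf⟩ := by
      rw [LinearEquiv.symm_apply_eq]
      simp [he]
    simp only [q, LinearMap.comp_apply, LinearEquiv.coe_coe, this]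
    rw [DirectSum.component.of, dif_neg (by simpa using hne)]
    simp

lemma aux_wedge_symm {L : Type*} [AddCommGroup L] [Module ℝ L]
    (U V : Submodule ℝ (Module.Dual ℝ L)) : wedgeSpan U V ≤ wedgeSpan V U := by
  unfold wedgeSpan
  rw [Submodule.span_le]
  rintro w ⟨a, ha, b, hb, rfl⟩
  have h := (wedgeSpan V U).smul_mem (-1 : ℝ) (Submodule.subset_span ⟨b, hb, a, ha, rfl⟩)
  unfold wedgeSpan at h
  rw [SetLike.mem_coe]
  convert h using 1
  ext x y
  simp

lemma aux_wedge_mem {L : Type*} [AddCommGroup L] [Module ℝ L] [Module.Finite ℝ L]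
    (U V : Submodule ℝ (Module.Dual ℝ L)) (σ : L →ₗ[ℝ] L →ₗ[ℝ] ℝ) (p q : L →ₗ[ℝ] L)
    (hp : ∀ f : Module.Dual ℝ L, f ∘ₗ p ∈ U) (hq : ∀ f : Module.Dual ℝ L, f ∘ₗ q ∈ V) :
    σ.compl₁₂ p q - (σ.compl₁₂ p q).flip ∈ wedgeSpan U V := by
  let e := Module.finBasis ℝ L
  have key : σ.compl₁₂ p q - (σ.compl₁₂ p q).flip = ∑ a, ∑ b, σ (e a) (e b) •
      (LinearMap.smulRight (e.coord a ∘ₗ p) (e.coord b ∘ₗ q)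
        - LinearMap.smulRight (e.coord b ∘ₗ q) (e.coord a ∘ₗ p)) := by
    have hs : ∀ u v : L, σ u v = ∑ a, ∑ b, σ (e a) (e b) * (e.coord a u * e.coord b v) := by
      intro u v
      conv_lhs => rw [← e.sum_repr u, ← e.sum_repr v]
      simp only [map_sum, LinearMap.sum_apply, map_smul, LinearMap.smul_apply, smul_eq_mul,
        Finset.mul_sum, Module.Basis.coord_apply]
      rw [Finset.sum_comm]
      refine Finset.sum_congr rfl fun a _ => Finset.sum_congr rfl fun b _ => ?_
      ring
    ext x y
    simp only [LinearMap.sub_apply, LinearMap.compl₁₂_apply, LinearMap.flip_apply,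
      LinearMap.sum_apply, LinearMap.smul_apply, LinearMap.smulRight_apply, LinearMap.comp_apply,
      smul_eq_mul]
    rw [hs (p x) (q y), hs (p y) (q x), ← Finset.sum_sub_distrib]
    refine Finset.sum_congr rfl fun a _ => ?_
    rw [← Finset.sum_sub_distrib]
    refine Finset.sum_congr rfl fun b _ => ?_
    ring
  rw [key]
  refine Submodule.sum_mem _ fun a _ => Submodule.sum_mem _ fun b _ => Submodule.smul_mem _ _ ?_
  exact Submodule.subset_span ⟨_, hp _, _, hq _, rfl⟩

lemma aux_core
    (L : Type*) [LieRing L] [LieAlgebra ℝ L] [Module.Finite ℝ L]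
    (k : ℕ) (hk2 : 2 ≤ k)
    (hstep : LieModule.lowerCentralSeries ℝ L L k = ⊥)
    (hstep' : LieModule.lowerCentralSeries ℝ L L (k - 1) ≠ ⊥)
    (σ : L →ₗ[ℝ] L →ₗ[ℝ] ℝ) (halt : ∀ x, σ x x = 0) (hcl : IsClosed2Form σ)
    (hnd : ∀ x ∈ LieModule.lowerCentralSeries ℝ L L 1, (∀ y, σ x y = 0) → x = 0)
    (m : ℕ → Submodule ℝ (Module.Dual ℝ L))
    (hindep : iSupIndep fun i : Finset.Icc 1 k => m i)
    (hm : ∀ j ∈ Finset.Icc 1 k,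
      (⨆ i ∈ Finset.Icc 1 j, m i) =
        ((LieModule.lowerCentralSeries ℝ L L j : LieSubmodule ℝ L L) :
          Submodule ℝ L).dualAnnihilator)
    (t : ℕ) (ht1 : 1 ≤ t) (ht2 : t ≤ (k + 1) / 2)
    (hdim : Module.finrank ℝ L <
      Module.finrank ℝ ((LieModule.lowerCentralSeries ℝ L L (k - t) : LieSubmodule ℝ L L) :
          Submodule ℝ L) +
      Module.finrank ℝ ((LieModule.lowerCentralSeries ℝ L L (t - 1) : LieSubmodule ℝ L L) :
          Submodule ℝ L))
    (P : (L →ₗ[ℝ] L →ₗ[ℝ] ℝ) →ₗ[ℝ] (L →ₗ[ℝ] L →ₗ[ℝ] ℝ))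
    (hP1 : ∀ ω ∈ wedgeSpan (m t) (m (k - t + 1)), P ω = ω)
    (hP2 : ∀ i j : ℕ, 1 ≤ i → i ≤ j → j ≤ k → ¬(i = t ∧ j = k - t + 1) →
      ∀ ω ∈ wedgeSpan (m i) (m j), P ω = 0) :
    ¬IsExact2Form σ ∧ P σ ≠ 0 := by
  have hneg : ∀ x y, σ x y = - σ y x := by
    intro x y
    have := halt (x + y)
    simp [halt] at this
    linarith
  constructor
  · rintro ⟨f, hf⟩
    apply hstep'
    rw [LieSubmodule.eq_bot_iff]
    intro z hz
    apply hnd z (LieModule.antitone_lowerCentralSeries ℝ L L (by omega : 1 ≤ k - 1) hz)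
    intro y
    have h := aux_bracket (k-1) 0 z y hz (by simp)
    rw [show k - 1 + 0 + 1 = k by omega, hstep] at h
    rw [hf, (LieSubmodule.mem_bot _).1 h]
    simp
  intro hP
  -- it suffices to see that `σ` vanishes on `C^{k-t} × C^{t-1}`
  suffices hvan : ∀ x ∈ LieModule.lowerCentralSeries ℝ L L (k - t),
      ∀ y ∈ LieModule.lowerCentralSeries ℝ L L (t - 1), σ x y = 0 by
    set A : Submodule ℝ L :=
      ((LieModule.lowerCentralSeries ℝ L L (k - t) : LieSubmodule ℝ L L) : Submodule ℝ L)
    set B : Submodule ℝ L :=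
      ((LieModule.lowerCentralSeries ℝ L L (t - 1) : LieSubmodule ℝ L L) : Submodule ℝ L)
    have h1 : Module.finrank ℝ A ≤ Module.finrank ℝ B.dualAnnihilator := by
      let φ : A →ₗ[ℝ] B.dualAnnihilator := LinearMap.codRestrict _ (σ ∘ₗ A.subtype) (by
        intro x
        rw [Submodule.mem_dualAnnihilator]
        intro y hy
        exact hvan x x.2 y hy)
      apply LinearMap.finrank_le_finrank_of_injective (f := φ)
      refine (injective_iff_map_eq_zero φ).2 ?_
      intro x hx
      apply Subtype.ext
      apply hnd x (LieModule.antitone_lowerCentralSeries ℝ L L (by omega : 1 ≤ k - t) x.2)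
      intro y
      exact congrArg (fun g : B.dualAnnihilator => (g : Module.Dual ℝ L) y) hx
    have h2 := Subspace.finrank_add_finrank_dualAnnihilator_eq B
    omega
  have htop : (⨆ i ∈ Finset.Icc 1 k, m i) = ⊤ := by
    rw [hm k (by simp; omega), hstep]
    simp
  obtain ⟨p, hpm, hps, hp0⟩ := aux_proj k m hindep htop
  let π : ℕ → L →ₗ[ℝ] L := fun i =>
    (Module.evalEquiv ℝ L).symm.toLinearMap ∘ₗ (p i).dualMap ∘ₗ (Module.evalEquiv ℝ L).toLinearMap
  have hπ : ∀ i (f : Module.Dual ℝ L) x, f (π i x) = p i f x := by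
    intro i f x
    simp [π]
  have hext : ∀ u v : L, (∀ f : Module.Dual ℝ L, f u = f v) → u = v := by
    intro u v h
    apply (Module.evalEquiv ℝ L).injective
    ext f
    exact h f
  have hπs : ∀ x, ∑ i ∈ Finset.Icc 1 k, π i x = x := by
    intro x
    apply hext
    intro f
    simp only [map_sum, hπ]
    rw [← LinearMap.sum_apply, hps]
  have hπ1 : ∀ i ∈ Finset.Icc 1 k, ∀ x, π i x ∈ LieModule.lowerCentralSeries ℝ L L (i - 1) := by
    intro i hi x
    rw [Finset.mem_Icc] at hi
    rcases Nat.eq_zero_or_pos (i - 1) with h0 | h0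
    · rw [h0]; simp
    change π i x ∈ ((LieModule.lowerCentralSeries ℝ L L (i-1) : LieSubmodule ℝ L L) : Submodule ℝ L)
    rw [← Subspace.dualAnnihilator_dualCoannihilator_eq
      (W := ((LieModule.lowerCentralSeries ℝ L L (i-1) : LieSubmodule ℝ L L) : Submodule ℝ L)),
      ← hm (i-1) (by simp; omega), Submodule.mem_dualCoannihilator]
    have hle : (⨆ l ∈ Finset.Icc 1 (i-1), m l) ≤ LinearMap.ker (p i) := by
      refine iSup₂_le fun l hl f hf => ?_
      rw [Finset.mem_Icc] at hl
      exact hp0 i (by simp; omega) l (by simp; omega) (by omega) f hf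
    intro f hf
    rw [hπ, LinearMap.mem_ker.1 (hle hf)]
    simp
  have hπ2 : ∀ i ∈ Finset.Icc 1 k, ∀ l, i ≤ l → ∀ x ∈ LieModule.lowerCentralSeries ℝ L L l,
      π i x = 0 := by
    intro i hi l hil x hx
    apply hext
    intro f
    simp only [hπ, map_zero]
    have h1 : p i f ∈ ⨆ l ∈ Finset.Icc 1 i, m l := by
      have := hpm i hi f
      rw [Finset.mem_Icc] at hi
      exact (le_biSup m (by simp; omega : i ∈ Finset.Icc 1 i)) this
    rw [hm i hi, Submodule.mem_dualAnnihilator] at h1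
    exact h1 x (LieModule.antitone_lowerCentralSeries ℝ L L hil hx)
  let W : ℕ → ℕ → (L →ₗ[ℝ] L →ₗ[ℝ] ℝ) := fun i j =>
    σ.compl₁₂ (π i) (π j) - (σ.compl₁₂ (π i) (π j)).flip
  have hW : ∀ i j x y, W i j x y = σ (π i x) (π j y) - σ (π i y) (π j x) := fun _ _ _ _ => rfl
  have hWm : ∀ i ∈ Finset.Icc 1 k, ∀ j ∈ Finset.Icc 1 k, W i j ∈ wedgeSpan (m i) (m j) := by
    intro i hi j hj
    apply aux_wedge_mem
    · intro f
      have : f ∘ₗ π i = p i f := by ext x; exact hπ i f x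
      rw [this]; exact hpm i hi f
    · intro f
      have : f ∘ₗ π j = p j f := by ext x; exact hπ j f x
      rw [this]; exact hpm j hj f
  have hsum : (2:ℝ) • σ = ∑ i ∈ Finset.Icc 1 k, ∑ j ∈ Finset.Icc 1 k, W i j := by
    ext x y
    have hs : ∀ u v, ∑ i ∈ Finset.Icc 1 k, ∑ j ∈ Finset.Icc 1 k, σ (π i u) (π j v) = σ u v := by
      intro u v
      conv_rhs => rw [← hπs u, ← hπs v]
      simp only [map_sum, LinearMap.sum_apply]
      rw [Finset.sum_comm]
    simp only [LinearMap.sum_apply, hW, Finset.sum_sub_distrib, hs, LinearMap.smul_apply,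
      smul_eq_mul]
    rw [hneg y x]; ring
  -- the special part `P (W i j)`, evaluated on `C^{k-t} × C^{t-1}`, is all of `W i j`
  intro x hx y hy
  have hPW : ∀ i ∈ Finset.Icc 1 k, ∀ j ∈ Finset.Icc 1 k, P (W i j) x y = W i j x y := by
    intro i hi j hj
    have hw := hWm i hi j hj
    have hi' := Finset.mem_Icc.1 hi
    have hj' := Finset.mem_Icc.1 hj
    by_cases h1 : i = t ∧ j = k - t + 1
    · rw [hP1 _ (by rw [h1.1, h1.2] at hw ⊢; exact hw)]
    by_cases h2 : j = t ∧ i = k - t + 1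
    · rw [hP1 _ (by rw [h2.1, h2.2] at hw ⊢; exact aux_wedge_symm _ _ hw)]
    have hz : P (W i j) = 0 := by
      rcases le_total i j with hij | hij
      · exact hP2 i j hi'.1 hij hj'.2 h1 _ hw
      · exact hP2 j i hj'.1 hij hi'.2 h2 _ (aux_wedge_symm _ _ hw)
    rw [hz, hW]
    have hbig : k + 2 ≤ i + j → ∀ u v, σ (π i u) (π j v) = 0 := by
      intro hk u v
      exact aux_vanish k hstep σ halt hcl (i-1) (j-1) _ _ (by omega) (hπ1 i hi u) (hπ1 j hj v)
    have e1 : σ (π i x) (π j y) = 0 := by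
      by_cases ha : i ≤ k - t
      · rw [hπ2 i hi _ ha x hx]; simp
      by_cases hb : j ≤ t - 1
      · rw [hπ2 j hj _ hb y hy]; simp
      exact hbig (by omega) _ _
    have e2 : σ (π i y) (π j x) = 0 := by
      by_cases ha : j ≤ k - t
      · rw [hπ2 j hj _ ha x hx]; simp
      by_cases hb : i ≤ t - 1
      · rw [hπ2 i hi _ hb y hy]; simp
      exact hbig (by omega) _ _
    rw [e1, e2]; simp
  have h2 : P ((2:ℝ) • σ) x y = ((2:ℝ) • σ) x y := by
    rw [hsum]
    simp only [map_sum, LinearMap.sum_apply]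
    exact Finset.sum_congr rfl fun i hi => Finset.sum_congr rfl fun j hj => hPW i hi j hj
  rw [map_smul, hP] at h2
  simp at h2
  exact h2

/-- Let `𝔫` be a nonabelian `k`-step nilpotent finite-dimensional real Lie algebra such that
`𝔫` or `ℝ⊕𝔫` is symplectic, and let `m₁,…,m_k` realize the dual decomposition associated with
the lower central series, with `P_t` the projection of `Λ²𝔫*` onto `m_t ∧ m_{k−t+1}`.  If
`dim C^{k−t}(𝔫) + dim C^{t−1}(𝔫) > dim 𝔫` for some `1 ≤ t ≤ ⌈k/2⌉`, then there is a closed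
2-form `σ` which is not exact and has `P_t σ ≠ 0`. -/
theorem exists_closed_not_exact_of_symplectic
    (L : Type*) [LieRing L] [LieAlgebra ℝ L] [Module.Finite ℝ L]
    (hnonab : ∃ x y : L, ⁅x, y⁆ ≠ 0)
    (k : ℕ) (hk1 : 1 ≤ k)
    (hstep : LieModule.lowerCentralSeries ℝ L L k = ⊥)
    (hstep' : LieModule.lowerCentralSeries ℝ L L (k - 1) ≠ ⊥)
    (hsymp : (∃ ω : L →ₗ[ℝ] L →ₗ[ℝ] ℝ, IsSymplectic ω) ∨
      (∃ ω : (ℝ × L) →ₗ[ℝ] (ℝ × L) →ₗ[ℝ] ℝ, IsSymplectic ω))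
    (m : ℕ → Submodule ℝ (Module.Dual ℝ L))
    (hindep : iSupIndep fun i : Finset.Icc 1 k => m i)
    (hm : ∀ j ∈ Finset.Icc 1 k,
      (⨆ i ∈ Finset.Icc 1 j, m i) =
        ((LieModule.lowerCentralSeries ℝ L L j : LieSubmodule ℝ L L) :
          Submodule ℝ L).dualAnnihilator)
    (t : ℕ) (ht1 : 1 ≤ t) (ht2 : t ≤ (k + 1) / 2)
    (hdim : Module.finrank ℝ L <
      Module.finrank ℝ ((LieModule.lowerCentralSeries ℝ L L (k - t) : LieSubmodule ℝ L L) :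
          Submodule ℝ L) +
      Module.finrank ℝ ((LieModule.lowerCentralSeries ℝ L L (t - 1) : LieSubmodule ℝ L L) :
          Submodule ℝ L))
    -- `P` is the projection onto `m_t ∧ m_{k−t+1}` along the remaining summands of
    -- `Λ²𝔫* = ⊕_{1≤i≤j≤k} m_i ∧ m_j`:
    (P : (L →ₗ[ℝ] L →ₗ[ℝ] ℝ) →ₗ[ℝ] (L →ₗ[ℝ] L →ₗ[ℝ] ℝ))
    (hP1 : ∀ ω ∈ wedgeSpan (m t) (m (k - t + 1)), P ω = ω)
    (hP2 : ∀ i j : ℕ, 1 ≤ i → i ≤ j → j ≤ k → ¬(i = t ∧ j = k - t + 1) →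
      ∀ ω ∈ wedgeSpan (m i) (m j), P ω = 0) :
    ∃ σ : L →ₗ[ℝ] L →ₗ[ℝ] ℝ, (∀ x : L, σ x x = 0) ∧ IsClosed2Form σ ∧
      ¬IsExact2Form σ ∧ P σ ≠ 0 := by
  have hk2 : 2 ≤ k := by
    by_contra hk
    obtain rfl : k = 1 := by omega
    obtain ⟨x, y, hxy⟩ := hnonab
    apply hxy
    have h := aux_bracket 0 0 x y (by simp) (by simp)
    rw [show 0 + 0 + 1 = 1 from rfl, hstep] at h
    exact (LieSubmodule.mem_bot _).1 h
  rcases hsymp with ⟨ω, halt, hnd, hcl⟩ | ⟨ω, halt, hnd, hcl⟩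
  · exact ⟨ω, halt, hcl, aux_core L k hk2 hstep hstep' ω halt hcl (fun x _ => hnd x) m hindep hm t
      ht1 ht2 hdim P hP1 hP2⟩
  · let ι : L →ₗ[ℝ] ℝ × L := LinearMap.inr ℝ ℝ L
    have hι : ∀ x y : L, ⁅ι x, ι y⁆ = ι ⁅x, y⁆ := fun _ _ => rfl
    have hcl' : IsClosed2Form (ω.compl₁₂ ι ι) := by
      intro x y z
      have := hcl (ι x) (ι y) (ι z)
      rw [hι, hι, hι] at this
      exact this
    have hnd' : ∀ x ∈ LieModule.lowerCentralSeries ℝ L L 1,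
        (∀ y, ω.compl₁₂ ι ι x y = 0) → x = 0 := by
      intro x hx h
      have he : ω (ι x) ((1 : ℝ), (0 : L)) = 0 := by
        clear h
        rw [LieModule.lowerCentralSeries_succ, ← LieSubmodule.mem_toSubmodule,
          LieSubmodule.lieIdeal_oper_eq_linear_span'] at hx
        induction hx using Submodule.span_induction with
        | mem x hx =>
          obtain ⟨u, -, w, hw, rfl⟩ := hx
          have h := hcl (ι u) (ι w) ((1 : ℝ), (0 : L))
          have h1 : ⁅ι w, ((1 : ℝ), (0 : L))⁆ = 0 := by
            change ((0 : ℝ), ⁅w, (0 : L)⁆) = 0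
            simp
          have h2 : ⁅((1 : ℝ), (0 : L)), ι u⁆ = 0 := by
            change ((0 : ℝ), ⁅(0 : L), u⁆) = 0
            simp
          rw [h1, h2, hι] at h
          simpa using h
        | zero => simp
        | add x y _ _ hx hy => simp [hx, hy]
        | smul c x _ hx => simp [hx]
      have h0 : ι x = 0 := by
        apply hnd
        rintro ⟨r, y⟩
        have : ((r, y) : ℝ × L) = r • ((1 : ℝ), (0 : L)) + ι y := by
          ext <;> simp [ι]
        rw [this, map_add, map_smul, he]
        have := h y
        rw [LinearMap.compl₁₂_apply] at this
        rw [this]; simp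
      exact congrArg Prod.snd h0
    exact ⟨ω.compl₁₂ ι ι, fun x => halt _, hcl', aux_core L k hk2 hstep hstep' _ (fun x => halt _)
      hcl' hnd' m hindep hm t ht1 ht2 hdim P hP1 hP2⟩
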